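/- Let 𝓔 be an abelian category, n ≥ 1, M an nℤ-cluster tilting subcategory of 𝓔, X ∈ M, and Y : 0 → Y⁰ → Y¹ → ⋯ → Yⁿ → Y^{n+1} → 0 an n-exact sequence in M. Then for every k ≥ 1 the four-term sequence of abelian groups Ext^{(k−1)n}(X,Yⁿ) → Ext^{(k−1)n}(X,Y^{n+1}) → Ext^{kn}(X,Y⁰) → Ext^{kn}(X,Y¹) is exact at its two middle terms, where the outer maps are induced by the differentials Yⁿ → Y^{n+1} and Y⁰ → Y¹ and the middle map is Yoneda composition with the class [Y] ∈ Extⁿ(Y^{n+1},Y⁰) (here Ext⁰ = Hom). -/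

import Mathlib

open CategoryTheory CategoryTheory.Abelian CategoryTheory.Limits

universe w v u

namespace NZPaper

variable {C : Type u} [Category.{v} C] [Abelian C] [HasExt.{w} C]

/-- A full (iso-closed) subcategory, encoded as a set of objects, is `n`-cluster tilting if it
admits monic left approximations and epic right approximations and is characterized by the
vanishing of `Ext^i` for `1 ≤ i ≤ n-1` on either side. -/
def IsNClusterTilting (n : ℕ) (M : Set C) : Prop :=
  (∀ ⦃X Y : C⦄, (X ≅ Y) → X ∈ M → Y ∈ M) ∧
  (∀ E : C, ∃ (X : C) (f : E ⟶ X), X ∈ M ∧ Mono f ∧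
      ∀ X' ∈ M, ∀ g : E ⟶ X', ∃ h : X ⟶ X', f ≫ h = g) ∧
  (∀ E : C, ∃ (X : C) (f : X ⟶ E), X ∈ M ∧ Epi f ∧
      ∀ X' ∈ M, ∀ g : X' ⟶ E, ∃ h : X' ⟶ X, h ≫ f = g) ∧
  (∀ E : C, E ∈ M ↔ ∀ Y ∈ M, ∀ i : ℕ, 1 ≤ i → i < n → ∀ e : Ext E Y i, e = 0) ∧
  (∀ E : C, E ∈ M ↔ ∀ Y ∈ M, ∀ i : ℕ, 1 ≤ i → i < n → ∀ e : Ext Y E i, e = 0)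

/-- An `nℤ`-cluster tilting subcategory: in addition `Ext^k` vanishes on `M` for every
`k ≥ 1` not divisible by `n`. -/
def IsNZClusterTilting (n : ℕ) (M : Set C) : Prop :=
  IsNClusterTilting n M ∧
  ∀ X ∈ M, ∀ Y ∈ M, ∀ k : ℕ, 1 ≤ k → ¬ (n ∣ k) → ∀ e : Ext X Y k, e = 0

/-- An exact sequence `0 → Y 0 → Y 1 → ⋯ → Y m → Y (m+1) → 0` in an abelian category,
recorded together with its canonical splicing into short exact sequences
`0 → K i → Y (i+1) → K (i+1) → 0` (`K i` is the image of `d i` for `1 ≤ i ≤ m`,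
`K 0 = Y 0` and `K m = Y (m+1)`).  Only the indices `0, …, m+1` (resp. `0, …, m`) of
`Y` (resp. of the differentials and of `K`) are relevant; the remaining values are junk
(any such exact sequence can be padded by zero objects). -/
structure ExactExtension (C : Type u) [Category.{v} C] [Abelian C] (m : ℕ) where
  Y : ℕ → C
  d : ∀ i, Y i ⟶ Y (i + 1)
  K : ℕ → C
  ι : ∀ i, K i ⟶ Y (i + 1)
  π : ∀ i, Y i ⟶ K i
  hK0 : K 0 = Y 0
  hKm : K m = Y (m + 1)
  zero : ∀ i, ι i ≫ π (i + 1) = 0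
  shortExact : ∀ i, (ShortComplex.mk (ι i) (π (i + 1)) (zero i)).ShortExact
  d0_eq : eqToHom hK0 ≫ d 0 = ι 0
  dmid_eq : ∀ i, 1 ≤ i → i + 1 ≤ m → d i = π i ≫ ι i
  dlast_eq : d m = π m ≫ eqToHom hKm

/-- The Yoneda class of the chain of the first `j` short exact sequences,
obtained as the Yoneda composite of their `Ext¹`-classes. -/
noncomputable def ExactExtension.chainClass {m : ℕ} (T : ExactExtension C m) :
    ∀ j : ℕ, Ext (T.K j) (T.K 0) j
  | 0 => Ext.mk₀ (𝟙 _)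
  | (j + 1) => ((T.shortExact j).extClass).comp (T.chainClass j) (by omega)

/-- The Yoneda class `[ξ] ∈ Ext^m (Y (m+1)) (Y 0)` of the exact sequence
`0 → Y 0 → ⋯ → Y (m+1) → 0`, i.e. the Yoneda composite of the `Ext¹`-classes of the
short exact sequences obtained by splicing it at its images. -/
noncomputable def ExactExtension.extClass {m : ℕ} (T : ExactExtension C m) :
    Ext (T.Y (m + 1)) (T.Y 0) m :=
  (Ext.mk₀ (eqToHom T.hKm.symm)).comp
    ((T.chainClass m).comp (Ext.mk₀ (eqToHom T.hK0)) (add_zero m)) (zero_add m)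

/-- Transport of an `Ext`-class along equalities of objects. -/
noncomputable def extTransport {X X' Z Z' : C} {a : ℕ} (e : Ext X Z a)
    (hX : X = X') (hZ : Z = Z') : Ext X' Z' a :=
  (Ext.mk₀ (eqToHom hX.symm)).comp (e.comp (Ext.mk₀ (eqToHom hZ)) (add_zero a)) (zero_add a)

/-- Exactness, at every spot, of the long sequence of abelian groups
`0 → Hom(X,Y⁰) → ⋯ → Hom(X,Y^{n+1}) → Extⁿ(X,Y⁰) → ⋯ → Extⁿ(X,Y^{n+1}) → Ext^{2n}(X,Y⁰) → ⋯`
(`Ext⁰ = Hom`), where within each row the maps are induced by the differentials of `T` and each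
connecting map `Ext^{kn}(X,Y^{n+1}) → Ext^{(k+1)n}(X,Y⁰)` is Yoneda composition with the class
`[T] ∈ Extⁿ(Y^{n+1},Y⁰)`. -/
def CovLES (n : ℕ) (X : C) (T : ExactExtension C n) : Prop :=
  (Function.Injective fun e : Ext X (T.Y 0) 0 => e.comp (Ext.mk₀ (T.d 0)) (add_zero 0)) ∧
  (∀ k i : ℕ, i < n → Function.Exact
      (fun e : Ext X (T.Y i) (k * n) => e.comp (Ext.mk₀ (T.d i)) (add_zero _))
      (fun e : Ext X (T.Y (i + 1)) (k * n) => e.comp (Ext.mk₀ (T.d (i + 1))) (add_zero _))) ∧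
  (∀ k : ℕ, Function.Exact
      (fun e : Ext X (T.Y n) (k * n) => e.comp (Ext.mk₀ (T.d n)) (add_zero _))
      (fun e : Ext X (T.Y (n + 1)) (k * n) =>
        e.comp T.extClass (show k * n + n = (k + 1) * n by ring))) ∧
  (∀ k : ℕ, Function.Exact
      (fun e : Ext X (T.Y (n + 1)) (k * n) =>
        e.comp T.extClass (show k * n + n = (k + 1) * n by ring))
      (fun e : Ext X (T.Y 0) ((k + 1) * n) => e.comp (Ext.mk₀ (T.d 0)) (add_zero _)))

/-- Exactness, at every spot, of the long sequence of abelian groups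
`0 → Hom(Y^{n+1},Z) → ⋯ → Hom(Y⁰,Z) → Extⁿ(Y^{n+1},Z) → ⋯ → Extⁿ(Y⁰,Z) → Ext^{2n}(Y^{n+1},Z) → ⋯`
(`Ext⁰ = Hom`), where within each row the maps are induced by the differentials of `T` and each
connecting map `Ext^{kn}(Y⁰,Z) → Ext^{(k+1)n}(Y^{n+1},Z)` is Yoneda precomposition with the class
`[T] ∈ Extⁿ(Y^{n+1},Y⁰)`. -/
def ContraLES (n : ℕ) (Z : C) (T : ExactExtension C n) : Prop :=
  (Function.Injective fun e : Ext (T.Y (n + 1)) Z 0 => (Ext.mk₀ (T.d n)).comp e (zero_add 0)) ∧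
  (∀ k i : ℕ, i < n → Function.Exact
      (fun e : Ext (T.Y (i + 2)) Z (k * n) => (Ext.mk₀ (T.d (i + 1))).comp e (zero_add _))
      (fun e : Ext (T.Y (i + 1)) Z (k * n) => (Ext.mk₀ (T.d i)).comp e (zero_add _))) ∧
  (∀ k : ℕ, Function.Exact
      (fun e : Ext (T.Y 1) Z (k * n) => (Ext.mk₀ (T.d 0)).comp e (zero_add _))
      (fun e : Ext (T.Y 0) Z (k * n) =>
        T.extClass.comp e (show n + k * n = (k + 1) * n by ring))) ∧
  (∀ k : ℕ, Function.Exact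
      (fun e : Ext (T.Y 0) Z (k * n) =>
        T.extClass.comp e (show n + k * n = (k + 1) * n by ring))
      (fun e : Ext (T.Y (n + 1)) Z ((k + 1) * n) => (Ext.mk₀ (T.d n)).comp e (zero_add _)))

end NZPaper

namespace NZPaper

/-!
Applying `Ext^*(X, -)` to each short exact sequence `0 → K i → Y (i+1) → K (i+1) → 0` of the
splicing gives a long exact sequence, and composition with the Yoneda class is the composite of
their connecting maps. When the groups `Ext^p(X, Y i)` vanish in the relevant degrees, the
intermediate connecting maps are injective (respectively surjective), so the kernel of the
composite is already the kernel of its first factor, and its image the image of its last one.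
In the `nℤ`-cluster tilting case these degrees lie strictly between `k * n` and `(k + 1) * n`.
-/

section

variable {C : Type u} [Category.{v} C] [Abelian C] [HasExt.{w} C] (X : C)

lemma exact_postcomp_mk₀_postcomp_extClass {S : ShortComplex C} (hS : S.ShortExact) {a b : ℕ}
    (h : a + 1 = b) :
    Function.Exact ((Ext.mk₀ S.g).postcomp X (add_zero a)) (hS.extClass.postcomp X h) :=
  (ShortComplex.ab_exact_iff_function_exact _).1 (Ext.covariant_sequence_exact₃' X hS a b h)

lemma exact_postcomp_extClass_postcomp_mk₀ {S : ShortComplex C} (hS : S.ShortExact) {a b : ℕ}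
    (h : a + 1 = b) :
    Function.Exact (hS.extClass.postcomp X h) ((Ext.mk₀ S.f).postcomp X (add_zero b)) :=
  (ShortComplex.ab_exact_iff_function_exact _).1 (Ext.covariant_sequence_exact₁' X hS a b h)

lemma postcomp_extClass_injective {S : ShortComplex C} (hS : S.ShortExact) {a b : ℕ}
    (h : a + 1 = b) [Subsingleton (Ext X S.X₂ a)] :
    Function.Injective (hS.extClass.postcomp X h) := by
  refine (injective_iff_map_eq_zero _).2 fun e he ↦ ?_
  obtain ⟨y, rfl⟩ := (exact_postcomp_mk₀_postcomp_extClass X hS h e).1 he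
  rw [Subsingleton.elim y 0, map_zero]

lemma postcomp_extClass_surjective {S : ShortComplex C} (hS : S.ShortExact) {a b : ℕ}
    (h : a + 1 = b) [Subsingleton (Ext X S.X₂ b)] :
    Function.Surjective (hS.extClass.postcomp X h) := fun e ↦
  (exact_postcomp_extClass_postcomp_mk₀ X hS h e).1 (Subsingleton.elim _ _)

/-- The isomorphism `Ext^a(X, Y) ≃ Ext^a(X, Z)` given by postcomposition with an isomorphism
`Y ≅ Z`; it removes the identifications `K 0 = Y 0` and `K m = Y (m + 1)` from exactness
statements. -/
noncomputable def postcompIso {Y Z : C} (e : Y ≅ Z) (a : ℕ) : Ext X Y a ≃+ Ext X Z a :=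
  ((extFunctorObj X a).mapIso e).addCommGroupIsoToAddEquiv

@[simp]
lemma postcompIso_apply {Y Z : C} (e : Y ≅ Z) {a : ℕ} (x : Ext X Y a) :
    postcompIso X e a x = x.comp (Ext.mk₀ e.hom) (add_zero a) :=
  rfl

namespace ExactExtension

section

variable {m : ℕ} (T : ExactExtension C m) {j a b : ℕ}

lemma postcomp_chainClass_succ (h : a + (j + 1) = b) :
    ⇑((T.chainClass (j + 1)).postcomp X h) =
      (T.chainClass j).postcomp X (by omega : a + 1 + j = b) ∘
        (T.shortExact j).extClass.postcomp X rfl := by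
  ext e
  exact (Ext.comp_assoc e (T.shortExact j).extClass (T.chainClass j) rfl
    (by omega : 1 + j = j + 1) (by omega)).symm

lemma chainClass_one : T.chainClass 1 = (T.shortExact 0).extClass := by
  simp [chainClass]

lemma postcomp_chainClass_injective (h : a + j = b)
    (hY : ∀ i < j, ∀ p, p + (i + 1) = b → Subsingleton (Ext X (T.Y (i + 1)) p)) :
    Function.Injective ((T.chainClass j).postcomp X h) := by
  induction j generalizing a with
  | zero =>
    obtain rfl : a = b := h
    intro x y hxy
    simpa [chainClass] using hxy
  | succ j ih =>
    have : Subsingleton (Ext X (T.Y (j + 1)) a) := hY j (by omega) a h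
    rw [postcomp_chainClass_succ]
    exact (ih _ fun i hi ↦ hY i (by omega)).comp
      (postcomp_extClass_injective X (T.shortExact j) rfl)

lemma exact_postcomp_π_postcomp_chainClass (h : a + (j + 1) = b)
    (hY : ∀ i < j, ∀ p, p + (i + 1) = b → Subsingleton (Ext X (T.Y (i + 1)) p)) :
    Function.Exact ((Ext.mk₀ (T.π (j + 1))).postcomp X (add_zero a))
      ((T.chainClass (j + 1)).postcomp X h) := by
  rw [postcomp_chainClass_succ]
  exact (exact_postcomp_mk₀_postcomp_extClass X (T.shortExact j) rfl).comp_injective _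
    (T.postcomp_chainClass_injective X _ hY) (map_zero _)

lemma exact_postcomp_chainClass_postcomp_ι (h : a + (j + 1) = b)
    (hY : ∀ i < j, ∀ p, p + (i + 1) = b → Subsingleton (Ext X (T.Y (i + 2)) p)) :
    Function.Exact ((T.chainClass (j + 1)).postcomp X h)
      ((Ext.mk₀ (T.ι 0)).postcomp X (add_zero b)) := by
  induction j generalizing a with
  | zero =>
    rw [chainClass_one]
    exact exact_postcomp_extClass_postcomp_mk₀ X (T.shortExact 0) h
  | succ j ih =>
    have : Subsingleton (Ext X (T.Y (j + 2)) (a + 1)) := hY j (by omega) _ (by omega)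
    intro e
    rw [postcomp_chainClass_succ,
      (postcomp_extClass_surjective X (T.shortExact (j + 1)) rfl).range_comp]
    exact ih _ (fun i hi ↦ hY i (by omega)) e

lemma mk₀_eqToHom_comp_extClass :
    (Ext.mk₀ (eqToHom T.hKm)).comp T.extClass (zero_add m) =
      (T.chainClass m).comp (Ext.mk₀ (eqToHom T.hK0)) (add_zero m) := by
  simp [extClass]

lemma postcomp_extClass_comp_postcompIso (h : a + m = b) :
    (T.extClass.postcomp X h).comp (postcompIso X (eqToIso T.hKm) a) =
      AddMonoidHom.comp (postcompIso X (eqToIso T.hK0) b) ((T.chainClass m).postcomp X h) := by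
  ext e
  simp [mk₀_eqToHom_comp_extClass]

end

variable {m : ℕ} (T : ExactExtension C (m + 1)) {a b : ℕ}

theorem exact_postcomp_d_postcomp_extClass (h : a + (m + 1) = b)
    (hY : ∀ i < m, ∀ p, p + (i + 1) = b → Subsingleton (Ext X (T.Y (i + 1)) p)) :
    Function.Exact ((Ext.mk₀ (T.d (m + 1))).postcomp X (add_zero a))
      (T.extClass.postcomp X h) := by
  refine Function.Exact.of_ladder_addEquiv_of_exact (AddEquiv.refl _)
    (postcompIso X (eqToIso T.hKm) a) (postcompIso X (eqToIso T.hK0) b) ?_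
    (T.postcomp_extClass_comp_postcompIso X h) (T.exact_postcomp_π_postcomp_chainClass X h hY)
  ext e
  simp [T.dlast_eq]

theorem exact_postcomp_extClass_postcomp_d (h : a + (m + 1) = b)
    (hY : ∀ i < m, ∀ p, p + (i + 1) = b → Subsingleton (Ext X (T.Y (i + 2)) p)) :
    Function.Exact (T.extClass.postcomp X h)
      ((Ext.mk₀ (T.d 0)).postcomp X (add_zero b)) := by
  refine Function.Exact.of_ladder_addEquiv_of_exact
    (postcompIso X (eqToIso T.hKm) a) (postcompIso X (eqToIso T.hK0) b) (AddEquiv.refl _)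
    (T.postcomp_extClass_comp_postcompIso X h) ?_ (T.exact_postcomp_chainClass_postcomp_ι X h hY)
  ext e
  simp [T.d0_eq]

end ExactExtension

variable {X}

lemma IsNZClusterTilting.subsingleton_ext {n : ℕ} {M : Set C} (hM : IsNZClusterTilting n M)
    (hX : X ∈ M) {Y : C} (hY : Y ∈ M) {p : ℕ} (hp : ¬ n ∣ p) : Subsingleton (Ext X Y p) :=
  subsingleton_of_forall_eq 0
    (hM.2 X hX Y hY p (Nat.pos_of_ne_zero fun h ↦ hp (h ▸ dvd_zero n)) hp)

end

theorem four_term_exactness_of_nZ_cluster_tilting_general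
    {C : Type u} [Category.{v} C] [Abelian C] [HasExt.{w} C]
    {n : ℕ} (hn : 1 ≤ n) {X : C} (T : ExactExtension C n) {a b : ℕ} (h : a + n = b)
    (hT : ∀ i, 1 ≤ i → i ≤ n → ∀ p, a < p → p < b → Subsingleton (Ext X (T.Y i) p)) :
    Function.Exact ((Ext.mk₀ (T.d n)).postcomp X (add_zero a)) (T.extClass.postcomp X h) ∧
      Function.Exact (T.extClass.postcomp X h) ((Ext.mk₀ (T.d 0)).postcomp X (add_zero b)) := by
  obtain ⟨m, rfl⟩ := Nat.exists_eq_add_of_le' hn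
  constructor
  · refine T.exact_postcomp_d_postcomp_extClass X h fun i hi p hp ↦ ?_
    exact hT (i + 1) (by omega) (by omega) p (by omega) (by omega)
  · refine T.exact_postcomp_extClass_postcomp_d X h fun i hi p hp ↦ ?_
    exact hT (i + 2) (by omega) (by omega) p (by omega) (by omega)

/-- Let `𝓔` be an abelian category, `n ≥ 1`, `M` an `nℤ`-cluster tilting
subcategory of `𝓔`, `X ∈ M`, and `T` an `n`-exact sequence in `M`.  Then for every `k ≥ 1`
(written `k + 1` below) the four-term sequence
`Ext^{kn}(X,Yⁿ) → Ext^{kn}(X,Y^{n+1}) → Ext^{(k+1)n}(X,Y⁰) → Ext^{(k+1)n}(X,Y¹)` is exact at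
its two middle terms, the outer maps being induced by the differentials and the middle map
being Yoneda composition with `[T] ∈ Extⁿ(Y^{n+1},Y⁰)` (with `Ext⁰ = Hom`). -/
theorem four_term_exactness_of_nZ_cluster_tilting
    {C : Type u} [Category.{v} C] [Abelian C] [HasExt.{w} C]
    (n : ℕ) (hn : 1 ≤ n) (M : Set C) (hM : IsNZClusterTilting n M)
    (X : C) (hX : X ∈ M)
    (T : ExactExtension C n) (hT : ∀ i ≤ n + 1, T.Y i ∈ M) :
    ∀ k : ℕ,
      Function.Exact
        (fun e : Ext X (T.Y n) (k * n) => e.comp (Ext.mk₀ (T.d n)) (add_zero _))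
        (fun e : Ext X (T.Y (n + 1)) (k * n) =>
          e.comp T.extClass (show k * n + n = (k + 1) * n by ring)) ∧
      Function.Exact
        (fun e : Ext X (T.Y (n + 1)) (k * n) =>
          e.comp T.extClass (show k * n + n = (k + 1) * n by ring))
        (fun e : Ext X (T.Y 0) ((k + 1) * n) => e.comp (Ext.mk₀ (T.d 0)) (add_zero _)) := by
  intro k
  refine four_term_exactness_of_nZ_cluster_tilting_general hn T (Nat.succ_mul k n).symm
    fun i _ hi p hkp hpk ↦ hM.subsingleton_ext hX (hT i (by omega)) ?_
  exact Nat.not_dvd_of_lt_of_lt_mul_succ (by rwa [mul_comm]) (by rwa [mul_comm])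

end NZPaper
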